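/- Let n ≥ 5 be an odd integer. Then there exists τ₀ ≥ 1 such that for all t ≥ τ₀ and all x ∈ ℝ, the potential V̂(x,t) = 2n (2 ū(x,t) φ(x,t) + φ(x,t)²)^{n−1} (ū(x,t) + φ(x,t)) is nonnegative. -/

import Mathlib

noncomputable def kap : ℝ := 1 / Real.sqrt Real.pi

noncomputable def kap3 : ℝ := -kap / 12

noncomputable def gam (n : ℕ) : ℝ := 1 / (2 * (n : ℝ) + 1)

noncomputable def eps (n : ℕ) : ℝ := 1 / ((n : ℝ) - 1)

noncomputable def alph (n : ℕ) : ℝ := 1 / 2 - gam n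

noncomputable def del (n : ℕ) : ℝ := ((n : ℝ) + 2) / ((n : ℝ) - 1)

noncomputable def lam (n : ℕ) : ℝ :=
  (del n * (del n + 1) / (2 * kap) ^ n) ^ (1 / ((n : ℝ) - 1))

noncomputable def lam0 (n : ℕ) : ℝ :=
  (lam n / (2 * kap)) *
    (-2 * (n : ℝ) * kap3 * del n * (del n + 1) - kap * (del n - 2 * eps n)) /
    (((n : ℝ) - 1) * del n * (del n + 1) + 2 * (2 * del n - 1))

def IsReactiveProfile (n : ℕ) (η : ℝ → ℝ) : Prop :=
  ContDiffOn ℝ 2 η (Set.Ici 0) ∧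
  (∀ z ∈ Set.Ici (0:ℝ), 0 < η z) ∧
  (∀ z ∈ Set.Ici (0:ℝ),
    derivWithin (derivWithin η (Set.Ici 0)) (Set.Ici 0) z
      = (2 * kap * z * η z + (η z) ^ 2) ^ n) ∧
  derivWithin η (Set.Ici 0) 0 = -kap ∧
  Filter.Tendsto η Filter.atTop (nhds 0)

/-- The corrector h: C² on [0,∞), satisfies
h'' + γη + αzη' = n(2κzη+η²)^{n−1}((2κz+2η)h + 2κ₃z³η), h'(0) = 0,
h(z) − λ₀ z^{2−δ} → 0 as z → ∞. -/
def IsCorrector (n : ℕ) (η h : ℝ → ℝ) : Prop :=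
  ContDiffOn ℝ 2 h (Set.Ici 0) ∧
  (∀ z ∈ Set.Ici (0:ℝ),
    derivWithin (derivWithin h (Set.Ici 0)) (Set.Ici 0) z + gam n * η z
        + alph n * z * derivWithin η (Set.Ici 0) z
      = (n : ℝ) * (2 * kap * z * η z + (η z) ^ 2) ^ (n - 1)
          * ((2 * kap * z + 2 * η z) * h z + 2 * kap3 * z ^ 3 * η z)) ∧
  derivWithin h (Set.Ici 0) 0 = 0 ∧
  Filter.Tendsto (fun z : ℝ => h z - lam0 n * z ^ (2 - del n)) Filter.atTop (nhds 0)

noncomputable def mu1 (y : ℝ) : ℝ :=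
  (2 / Real.sqrt Real.pi) * ∫ σ in (0:ℝ)..(y / 2), Real.exp (-σ ^ 2)

def IsDiffusiveProfile (n : ℕ) (μ : ℝ → ℝ) : Prop :=
  ContDiffOn ℝ 2 μ (Set.Ioi 0) ∧
  (∀ y ∈ Set.Ioi (0:ℝ), 0 < μ y) ∧
  (∀ y ∈ Set.Ioi (0:ℝ),
    deriv (deriv μ) y + y / 2 * deriv μ y + eps n * μ y = (2 * mu1 y * μ y) ^ n) ∧
  Filter.Tendsto (fun y : ℝ => y ^ del n * μ y) (nhdsWithin 0 (Set.Ioi 0)) (nhds (lam n)) ∧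
  Filter.Tendsto (fun y : ℝ => y ^ (2 * eps n) * μ y) Filter.atTop (nhds 0)

/-- u(x,t) = −erf(x/(2√t)). -/
noncomputable def uu (x t : ℝ) : ℝ := -mu1 (x / Real.sqrt t)

/-- ū(x,t) = μ₁(|x|/√t). -/
noncomputable def ubar (x t : ℝ) : ℝ := mu1 (|x| / Real.sqrt t)

/-- φ₁(z) = η(z) − λ z^{−δ}. -/
noncomputable def phi1 (n : ℕ) (η : ℝ → ℝ) (z : ℝ) : ℝ := η z - lam n * z ^ (-(del n))

/-- φ₂(z) = −λ₀ z^{2−δ} + h(z). -/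
noncomputable def phi2 (n : ℕ) (h : ℝ → ℝ) (z : ℝ) : ℝ := -lam0 n * z ^ (2 - del n) + h z

/-- μ₃(y) = μ₂(y) − λ y^{−δ}. -/
noncomputable def mu3 (n : ℕ) (μ : ℝ → ℝ) (y : ℝ) : ℝ := μ y - lam n * y ^ (-(del n))

/-- The asymptotic profile v_∞. -/
noncomputable def vInf (n : ℕ) (η μ h : ℝ → ℝ) (x t : ℝ) : ℝ :=
  mu1 (|x| / Real.sqrt t) + t ^ (-(eps n)) * μ (|x| / Real.sqrt t)
    + t ^ (-(gam n)) * phi1 n η (|x| / t ^ alph n)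
    + t ^ (-(3 * gam n)) * phi2 n h (|x| / t ^ alph n)

/-- φ(x,t) = t^{−γ} η(|z|) + t^{−ε} μ₃(|y|) + t^{−3γ} φ₂(|z|). -/
noncomputable def phiFun (n : ℕ) (η μ h : ℝ → ℝ) (x t : ℝ) : ℝ :=
  t ^ (-(gam n)) * η (|x| / t ^ alph n) + t ^ (-(eps n)) * mu3 n μ (|x| / Real.sqrt t)
    + t ^ (-(3 * gam n)) * phi2 n h (|x| / t ^ alph n)

/-- The potential V̂(x,t) = 2n (2ūφ + φ²)^{n−1} (ū + φ). -/
noncomputable def Vhat (n : ℕ) (η μ h : ℝ → ℝ) (x t : ℝ) : ℝ :=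
  2 * (n : ℝ) * (2 * ubar x t * phiFun n η μ h x t + phiFun n η μ h x t ^ 2) ^ (n - 1)
    * (ubar x t + phiFun n η μ h x t)

theorem kap_pos : 0 < kap := by unfold kap; positivity

theorem mu1_nonneg {y : ℝ} (hy : 0 ≤ y) : 0 ≤ mu1 y := by
  unfold mu1
  apply mul_nonneg (by positivity)
  apply intervalIntegral.integral_nonneg (by linarith)
  intro u _; positivity

theorem mu1_le {y : ℝ} (hy : 0 ≤ y) : mu1 y ≤ kap * y := by
  unfold mu1 kap
  have h : ∫ σ in (0:ℝ)..(y / 2), Real.exp (-σ ^ 2) ≤ ∫ σ in (0:ℝ)..(y / 2), (1:ℝ) := by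
    apply intervalIntegral.integral_mono_on (by linarith)
    · apply Continuous.intervalIntegrable; fun_prop
    · simp
    · intro x _
      rw [Real.exp_le_one_iff]; nlinarith [sq_nonneg x]
  simp only [intervalIntegral.integral_const, sub_zero, smul_eq_mul, mul_one] at h
  calc 2 / Real.sqrt Real.pi * ∫ σ in (0:ℝ)..(y / 2), Real.exp (-σ ^ 2)
      ≤ 2 / Real.sqrt Real.pi * (y / 2) := by gcongr
    _ = _ := by ring

theorem mu1_ge {s y : ℝ} (hs : 0 ≤ s) (hs1 : s ≤ 1) (hy : s ≤ y) :
    kap * Real.exp (-1) * s ≤ mu1 y := by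
  unfold mu1 kap
  have h0 : ∫ σ in (0:ℝ)..(s / 2), Real.exp (-1) ≤ ∫ σ in (0:ℝ)..(s / 2), Real.exp (-σ ^ 2) := by
    apply intervalIntegral.integral_mono_on (by linarith)
    · simp
    · apply Continuous.intervalIntegrable; fun_prop
    · intro x hx
      rw [Real.exp_le_exp]
      have h1 := hx.1
      have h2 := hx.2
      nlinarith
  have h1 : ∫ σ in (0:ℝ)..(s / 2), Real.exp (-σ ^ 2) ≤ ∫ σ in (0:ℝ)..(y / 2), Real.exp (-σ ^ 2) := by
    apply intervalIntegral.integral_mono_interval le_rfl (by linarith) (by linarith)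
    · exact Filter.Eventually.of_forall fun x => (Real.exp_pos _).le
    · apply Continuous.intervalIntegrable; fun_prop
  simp only [intervalIntegral.integral_const, sub_zero, smul_eq_mul] at h0
  calc 1 / Real.sqrt Real.pi * Real.exp (-1) * s
      = 2 / Real.sqrt Real.pi * (s / 2 * Real.exp (-1)) := by ring
    _ ≤ _ := by gcongr; linarith

theorem deriv2_nonneg_of_isLocalMin {f : ℝ → ℝ} {y : ℝ} (hf : IsLocalMin f y)
    (hc : ContinuousAt f y) : 0 ≤ deriv (deriv f) y := by
  by_contra! hneg
  have hmax := isLocalMax_of_deriv_deriv_neg hneg hf.deriv_eq_zero hc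
  have heq : f =ᶠ[nhds y] fun _ => f y := by
    filter_upwards [hf, hmax] with x h1 h2
    exact le_antisymm h2 h1
  have h1 : deriv f =ᶠ[nhds y] fun _ => 0 := by
    have := heq.deriv
    simpa using this
  rw [h1.deriv_eq] at hneg
  simp at hneg

theorem del_gt {n : ℕ} (hn : 5 ≤ n) : 1 < del n := by
  have : (5:ℝ) ≤ n := by exact_mod_cast hn
  unfold del
  rw [lt_div_iff₀] <;> linarith

theorem del_lt {n : ℕ} (hn : 5 ≤ n) : del n < 2 := by
  have : (5:ℝ) ≤ n := by exact_mod_cast hn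
  unfold del
  rw [div_lt_iff₀] <;> linarith

theorem eps_pos {n : ℕ} (hn : 5 ≤ n) : 0 < eps n := by
  have : (5:ℝ) ≤ n := by exact_mod_cast hn
  unfold eps
  apply div_pos <;> linarith

theorem eps_le {n : ℕ} (hn : 5 ≤ n) : eps n ≤ 1 := by
  have : (5:ℝ) ≤ n := by exact_mod_cast hn
  unfold eps
  rw [div_le_iff₀] <;> linarith

theorem gam_pos (n : ℕ) : 0 < gam n := by unfold gam; positivity

theorem gam_lt_eps {n : ℕ} (hn : 5 ≤ n) : gam n < eps n := by
  have : (5:ℝ) ≤ n := by exact_mod_cast hn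
  unfold gam eps
  apply one_div_lt_one_div_of_lt <;> linarith

theorem lam_pos {n : ℕ} (hn : 5 ≤ n) : 0 < lam n := by
  have := del_gt hn
  have := kap_pos
  unfold lam
  positivity

theorem lam_pow {n : ℕ} (hn : 5 ≤ n) :
    (2 * kap) ^ n * lam n ^ (n - 1) = del n * (del n + 1) := by
  have h1 := del_gt hn
  have h2 := kap_pos
  have h5 : (5:ℝ) ≤ n := by exact_mod_cast hn
  have : lam n ^ (n - 1) = del n * (del n + 1) / (2 * kap) ^ n := by
    unfold lam
    rw [← Real.rpow_natCast, ← Real.rpow_mul (by positivity)]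
    rw [Nat.cast_sub (by omega)]
    have : 1 / ((n:ℝ) - 1) * ((n:ℝ) - (1:ℕ)) = 1 := by
      have : (n:ℝ) - 1 ≠ 0 := by linarith
      push_cast
      field_simp
    rw [this, Real.rpow_one]
  rw [this]
  field_simp

/-- the key pointwise bound on the nonlinearity -/
theorem nonlin_bound {n : ℕ} (hn : 5 ≤ n) {y m : ℝ} (hy : 0 < y) (hm : 0 < m)
    (hle : m ≤ lam n * y ^ (-(del n))) :
    (2 * mu1 y * m) ^ n ≤ del n * (del n + 1) * y ^ (-2 : ℝ) * m := by
  have h5 : (5:ℝ) ≤ n := by exact_mod_cast hn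
  have hk := kap_pos
  have h0 := mu1_nonneg hy.le
  have h1 := mu1_le hy.le
  have hl := lam_pos hn
  have e : n = (n - 1) + 1 := by omega
  have hy2 : y ^ n * (y ^ (-(del n))) ^ (n - 1) = y ^ (-2 : ℝ) := by
    rw [← Real.rpow_natCast, ← Real.rpow_natCast, ← Real.rpow_mul hy.le, ← Real.rpow_add hy]
    congr 1
    rw [Nat.cast_sub (by omega)]
    unfold del
    have : (n:ℝ) - 1 ≠ 0 := by linarith
    push_cast
    field_simp
    ring
  calc (2 * mu1 y * m) ^ n ≤ (2 * (kap * y) * m) ^ n := by gcongr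
    _ = (2 * kap) ^ n * y ^ n * (m ^ (n - 1) * m) := by
        rw [← pow_succ, ← e]; ring
    _ ≤ (2 * kap) ^ n * y ^ n * ((lam n * y ^ (-(del n))) ^ (n - 1) * m) := by gcongr
    _ = ((2 * kap) ^ n * lam n ^ (n - 1)) * (y ^ n * (y ^ (-(del n))) ^ (n - 1)) * m := by
        rw [mul_pow (lam n)]; ring
    _ = _ := by rw [lam_pow hn, hy2]

theorem mu_lower_theta {n : ℕ} (hn : 5 ≤ n) {μ : ℝ → ℝ} (hμ : IsDiffusiveProfile n μ)
    {θ : ℝ} (hθ : 0 < θ) {y : ℝ} (hy : 0 < y) (hy1 : y ≤ 1) :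
    (lam n - θ) * y ^ (-(del n)) - lam n ≤ μ y := by
  obtain ⟨hC, hpos, hode, hlim, -⟩ := hμ
  have hd1 := del_gt hn
  have hd2 := del_lt hn
  have he0 := eps_pos hn
  have he1 := eps_le hn
  have hl := lam_pos hn
  set d := del n with hd
  set b := lam n - θ with hb
  set f : ℝ → ℝ := fun y => μ y - b * y ^ (-d) + lam n with hf
  by_contra! hlt
  have hfy : f y < 0 := by simp only [hf]; linarith
  -- positivity near zero
  have hnear : ∀ᶠ x in nhdsWithin (0:ℝ) (Set.Ioi 0), 0 < f x := by
    have h1 : ∀ᶠ x in nhdsWithin (0:ℝ) (Set.Ioi 0), b < x ^ d * μ x :=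
      hlim.eventually (lt_mem_nhds (by linarith))
    filter_upwards [h1, self_mem_nhdsWithin] with x hx hx0
    have hx0 : 0 < x := hx0
    have hp : 0 < x ^ (-d) := Real.rpow_pos_of_pos hx0 _
    have h2 : x ^ (-d) * x ^ d = 1 := by
      rw [← Real.rpow_add hx0]; simp
    have h3 : x ^ (-d) * b < x ^ (-d) * (x ^ d * μ x) := by gcongr
    rw [← mul_assoc, h2] at h3
    simp only [hf]; linarith
  obtain ⟨a, ha, ha0, hay⟩ : ∃ a, 0 < f a ∧ 0 < a ∧ a < y := by
    have h2 : ∀ᶠ x in nhdsWithin (0:ℝ) (Set.Ioi 0), x < y :=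
      (nhdsWithin_le_nhds) (gt_mem_nhds hy)
    obtain ⟨a, h1, h2, h3⟩ := (hnear.and (h2.and self_mem_nhdsWithin)).exists
    exact ⟨a, h1, h3, h2⟩
  have hD : ∀ x, 0 < x → HasDerivAt f (deriv μ x + b * d * x ^ (-d - 1)) x := by
    intro x hx
    have h1 : HasDerivAt μ (deriv μ x) x :=
      ((hC.differentiableOn (by norm_num)).differentiableAt (Ioi_mem_nhds hx)).hasDerivAt
    have h2 := (Real.hasDerivAt_rpow_const (p := -d) (Or.inl hx.ne')).const_mul b
    exact ((h1.sub h2).add_const (lam n)).congr_deriv (by ring)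
  have hD2 : ∀ x, 0 < x → HasDerivAt (deriv f)
      (deriv (deriv μ) x - b * d * (d + 1) * x ^ (-d - 2)) x := by
    intro x hx
    have hev : deriv f =ᶠ[nhds x] fun x => deriv μ x + b * d * x ^ (-d - 1) := by
      filter_upwards [Ioi_mem_nhds hx] with u hu
      exact (hD u hu).deriv
    have hC1 : ContDiffOn ℝ 1 (deriv μ) (Set.Ioi 0) :=
      hC.deriv_of_isOpen isOpen_Ioi (by norm_num)
    have h1 : HasDerivAt (deriv μ) (deriv (deriv μ) x) x :=
      ((hC1.differentiableOn (by norm_num)).differentiableAt (Ioi_mem_nhds hx)).hasDerivAt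
    have h2 := (Real.hasDerivAt_rpow_const (p := -d - 1) (Or.inl hx.ne')).const_mul (b * d)
    refine ((h1.add h2).congr_of_eventuallyEq hev).congr_deriv ?_
    rw [show -d - 1 - 1 = -d - 2 by ring]
    ring
  have hcont : ContinuousOn f (Set.Icc a 1) := fun x hx =>
    (hD x (lt_of_lt_of_le ha0 hx.1)).continuousAt.continuousWithinAt
  obtain ⟨m, hm, hmin⟩ := isCompact_Icc.exists_isMinOn ⟨y, hay.le, hy1⟩ hcont
  have hfm : f m < 0 := lt_of_le_of_lt (hmin ⟨hay.le, hy1⟩) hfy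
  have hf1 : 0 < f 1 := by
    have := hpos 1 (by simp)
    simp only [hf, Real.one_rpow]; linarith
  have hma : a < m := by
    rcases hm.1.lt_or_eq with h | h
    · exact h
    · rw [← h] at hfm; linarith
  have hm1 : m < 1 := by
    rcases hm.2.lt_or_eq with h | h
    · exact h
    · rw [h] at hfm; linarith
  have hm0 : 0 < m := ha0.trans hma
  have hloc : IsLocalMin f m := hmin.isLocalMin (Icc_mem_nhds hma hm1)
  have hz := hloc.deriv_eq_zero
  have hzz := deriv2_nonneg_of_isLocalMin hloc (hD m hm0).continuousAt
  rw [(hD m hm0).deriv] at hz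
  rw [(hD2 m hm0).deriv] at hzz
  have hmu := hpos m hm0
  have ho := hode m hm0
  set s := m ^ (-d) with hs
  have hsp : 0 < s := Real.rpow_pos_of_pos hm0 _
  have hfm' : μ m < b * s - lam n := by simp only [hf] at hfm; linarith
  have hnl := nonlin_bound hn hm0 hmu (by
    rw [← hd, ← hs]; nlinarith)
  set q := m ^ (-2 : ℝ) with hq
  have hqs : s ≤ q := Real.rpow_le_rpow_of_exponent_ge hm0 hm1.le (by linarith)
  have hq1 : 1 ≤ q := Real.one_le_rpow_of_pos_of_le_one_of_nonpos hm0 hm1.le (by norm_num)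
  have e1 : m ^ (-d - 2) = s * q := by
    rw [hs, hq, ← Real.rpow_add hm0]; congr 1
  have e2 : m * m ^ (-d - 1) = s := by
    rw [hs]; nth_rewrite 1 [← Real.rpow_one m]
    rw [← Real.rpow_add hm0]; congr 1; ring
  rw [e1] at hzz
  have hz' : m / 2 * deriv μ m = - (b * d / 2 * s) := by
    have : m / 2 * deriv μ m = m / 2 * (deriv μ m + b * d * m ^ (-d - 1))
      - b * d / 2 * (m * m ^ (-d - 1)) := by ring
    rw [this, hz, e2]; ring
  rw [hz'] at ho
  rw [← hd] at hnl
  -- combine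
  have hD0 : 2 < d * (d + 1) := by nlinarith
  have hDq : 2 * q ≤ d * (d + 1) * q := by gcongr
  have hco : 0 < d * (d + 1) * q - eps n := by linarith
  have hbs : b * s ≤ lam n * q := by
    have : b * s ≤ lam n * s := by apply mul_le_mul_of_nonneg_right _ hsp.le; linarith
    have : lam n * s ≤ lam n * q := by gcongr
    linarith
  have hbpos : 0 < b * s := by linarith
  have k1 : 0 ≤ (d * (d + 1) * q - eps n) * μ m - d * (d + 1) * q * (b * s)
      + d / 2 * (b * s) := by
    have e3 : b * d * (d + 1) * (s * q) = d * (d + 1) * q * (b * s) := by ring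
    have e4 : b * d / 2 * s = d / 2 * (b * s) := by ring
    have e5 : (d * (d + 1) * q - eps n) * μ m = d * (d + 1) * q * μ m - eps n * μ m := by ring
    rw [e5]; rw [e3] at hzz; rw [e4] at ho
    linarith
  have k2 : (d * (d + 1) * q - eps n) * μ m < (d * (d + 1) * q - eps n) * (b * s - lam n) := by
    apply mul_lt_mul_of_pos_left hfm' hco
  have k3 : (d / 2 - eps n) * (b * s) ≤ lam n * q := by
    have : (d / 2 - eps n) * (b * s) ≤ 1 * (b * s) := by
      apply mul_le_mul_of_nonneg_right _ hbpos.le; linarith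
    linarith
  have k4 : lam n * q ≤ (d * (d + 1) * q - eps n) * lam n := by
    rw [mul_comm]
    apply mul_le_mul_of_nonneg_right _ hl.le
    linarith
  linarith

theorem mu3_lower {n : ℕ} (hn : 5 ≤ n) {μ : ℝ → ℝ} (hμ : IsDiffusiveProfile n μ)
    {y : ℝ} (hy : 0 < y) : -lam n ≤ mu3 n μ y := by
  have hl := lam_pos hn
  have hd1 := del_gt hn
  unfold mu3
  have hs : 0 < y ^ (-(del n)) := Real.rpow_pos_of_pos hy _
  rcases le_or_gt y 1 with h1 | h1
  · have : lam n * y ^ (-(del n)) - lam n ≤ μ y := by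
      apply le_of_forall_pos_le_add
      intro e he
      have := mu_lower_theta hn hμ (θ := e / y ^ (-(del n))) (by positivity) hy h1
      rw [sub_mul, div_mul_cancel₀ _ hs.ne'] at this
      linarith
    linarith
  · have h2 : y ^ (-(del n)) ≤ 1 := Real.rpow_le_one_of_one_le_of_nonpos h1.le (by linarith)
    have := hμ.2.1 y hy
    nlinarith

theorem phi2_lower {n : ℕ} (hn : 5 ≤ n) {η h : ℝ → ℝ} (hh : IsCorrector n η h) :
    ∃ C : ℝ, 0 ≤ C ∧ ∀ z, 0 ≤ z → -C ≤ phi2 n h z := by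
  have hd2 := del_lt hn
  obtain ⟨hC, -, -, hlim⟩ := hh
  have hev : ∀ᶠ z in Filter.atTop, -1 < h z - lam0 n * z ^ (2 - del n) :=
    hlim.eventually (lt_mem_nhds (by norm_num))
  obtain ⟨Z, hZ⟩ := Filter.eventually_atTop.1 hev
  have hcont : ContinuousOn (phi2 n h) (Set.Icc 0 Z) := by
    unfold phi2
    apply ContinuousOn.add
    · apply ContinuousOn.mul continuousOn_const
      exact (Real.continuous_rpow_const (by linarith)).continuousOn
    · exact hC.continuousOn.mono Set.Icc_subset_Ici_self
  obtain ⟨B, hB⟩ := (isCompact_Icc.bddBelow_image hcont)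
  refine ⟨max 1 (-B), by positivity, fun z hz => ?_⟩
  rcases le_or_gt z Z with h1 | h1
  · have := hB ⟨z, ⟨hz, h1⟩, rfl⟩
    have := le_max_right 1 (-B)
    linarith
  · have := hZ z h1.le
    have := le_max_left 1 (-B)
    unfold phi2
    linarith

/-- For n odd, n ≥ 5, the potential V̂ is nonnegative for all large times. -/
theorem potential_nonneg_odd (n : ℕ) (hn : 5 ≤ n) (hodd : Odd n) (η μ h : ℝ → ℝ)
    (hη : IsReactiveProfile n η) (hμ : IsDiffusiveProfile n μ) (hh : IsCorrector n η h) :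
    ∃ τ₀ : ℝ, 1 ≤ τ₀ ∧ ∀ t ≥ τ₀, ∀ x : ℝ, 0 ≤ Vhat n η μ h x t := by
  obtain ⟨C, hC0, hC⟩ := phi2_lower hn hh
  have hl := lam_pos hn
  have hk := kap_pos
  have hg := gam_pos n
  have hge := gam_lt_eps hn
  -- lower bound for eta on [0,1]
  obtain ⟨c0, hc0, hc⟩ : ∃ c0 : ℝ, 0 < c0 ∧ ∀ z ∈ Set.Icc (0:ℝ) 1, c0 ≤ η z := by
    obtain ⟨m, hm, hmin⟩ := isCompact_Icc.exists_isMinOn (s := Set.Icc (0:ℝ) 1) ⟨0, by simp⟩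
      (hη.1.continuousOn.mono Set.Icc_subset_Ici_self)
    exact ⟨η m, hη.2.1 m hm.1, fun z hz => hmin hz⟩
  set c := min c0 (kap * Real.exp (-1)) with hcdef
  have hcpos : 0 < c := lt_min hc0 (by positivity)
  set M := lam n + |μ 0| with hM
  have hM0 : 0 ≤ M := by positivity
  have hmu3 : ∀ y, 0 ≤ y → -M ≤ mu3 n μ y := by
    intro y hy
    rcases hy.lt_or_eq with h1 | h1
    · have := mu3_lower hn hμ h1
      have := abs_nonneg (μ 0)
      linarith
    · subst h1
      have hd1 := del_gt hn
      unfold mu3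
      rw [Real.zero_rpow (by linarith)]
      have := neg_abs_le (μ 0)
      linarith
  have hlim : Filter.Tendsto (fun t : ℝ => M * t ^ (-(eps n - gam n)) + C * t ^ (-(2 * gam n)))
      Filter.atTop (nhds (M * 0 + C * 0)) :=
    ((tendsto_rpow_neg_atTop (by linarith)).const_mul M).add
      ((tendsto_rpow_neg_atTop (by linarith)).const_mul C)
  have hlt : M * 0 + C * 0 < c := by simpa using hcpos
  have hev := hlim.eventually (gt_mem_nhds hlt)
  obtain ⟨T, hT⟩ := Filter.eventually_atTop.1 hev
  refine ⟨max 1 T, le_max_left _ _, fun t ht x => ?_⟩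
  have ht1 : 1 ≤ t := (le_max_left _ _).trans ht
  have ht0 : 0 < t := by linarith
  have hTt := hT t ((le_max_right _ _).trans ht)
  have heven : Even (n - 1) := hodd.tsub_odd odd_one
  unfold Vhat
  apply mul_nonneg
  · apply mul_nonneg (by positivity) (heven.pow_nonneg _)
  unfold ubar phiFun
  have hta : 0 < t ^ alph n := Real.rpow_pos_of_pos ht0 _
  set z := |x| / t ^ alph n with hz
  set y := |x| / Real.sqrt t with hy
  have hz0 : 0 ≤ z := by positivity
  have hy0 : 0 ≤ y := by positivity
  set r := t ^ (-(gam n)) with hr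
  have hr0 : 0 < r := Real.rpow_pos_of_pos ht0 _
  have hr1 : r ≤ 1 := Real.rpow_le_one_of_one_le_of_nonpos ht1 (by linarith)
  have hyz : y = z * r := by
    rw [hy, hz, hr, Real.sqrt_eq_rpow, div_mul_eq_mul_div, div_eq_div_iff (by positivity) (by positivity),
      mul_assoc, ← Real.rpow_add ht0]
    congr 2
    unfold alph; ring
  have hmain : c * r ≤ mu1 y + r * η z := by
    have hηz := hη.2.1 z hz0
    rcases le_or_gt z 1 with h1 | h1
    · have h2 := hc z ⟨hz0, h1⟩
      have h3 := mu1_nonneg hy0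
      have h4 : c ≤ η z := (min_le_left _ _).trans h2
      have : r * c ≤ r * η z := by gcongr
      linarith
    · have h2 : r ≤ y := by rw [hyz]; nlinarith
      have h3 := mu1_ge hr0.le hr1 h2
      have h4 : c * r ≤ kap * Real.exp (-1) * r := by gcongr; exact min_le_right _ _
      have : 0 < r * η z := by positivity
      linarith
  have e1 : t ^ (-(eps n)) = t ^ (-(eps n - gam n)) * r := by
    rw [hr, ← Real.rpow_add ht0]; congr 1; ring
  have e2 : t ^ (-(3 * gam n)) = t ^ (-(2 * gam n)) * r := by
    rw [hr, ← Real.rpow_add ht0]; congr 1; ring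
  have b1 : t ^ (-(eps n)) * (-M) ≤ t ^ (-(eps n)) * mu3 n μ y := by
    have := hmu3 y hy0
    gcongr
  have b2 : t ^ (-(3 * gam n)) * (-C) ≤ t ^ (-(3 * gam n)) * phi2 n h z := by
    have := hC z hz0
    gcongr
  have b3 : (M * t ^ (-(eps n - gam n)) + C * t ^ (-(2 * gam n))) * r ≤ c * r := by
    gcongr
  rw [e1] at b1 ⊢
  rw [e2] at b2 ⊢
  linarith
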